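/- (Strong form of the Nehari–Schwarz lemma at an interior point) Let f be a nonconstant holomorphic function from the open unit disk 𝔻 into the closed unit disk, and let B be a finite Blaschke product such that every zero of B' in 𝔻 is a zero of f' of at least the same order. If |f'(z)| (1 − |B(z)|²) = |B'(z)| (1 − |f(z)|²) holds for some point z ∈ 𝔻 with B'(z) ≠ 0, then f = T ∘ B for some conformal automorphism T of 𝔻. -/

import Mathlib

open Metric Filter

/-- The order of vanishing of `f` at `z`. -/
noncomputable def vOrder (f : ℂ → ℂ) (z : ℂ) : ℕ∞ :=
  sInf ((fun n : ℕ => (n : ℕ∞)) '' {n : ℕ | iteratedDeriv n f z ≠ 0})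

/-!
Write `f' = h B'` with `h` holomorphic and let `V = |h| (1 - |B|²) / (1 - |f|²)` be the ratio of the
hyperbolic metrics pulled back by `f` and by `B`. It is bounded by `1` in the limit at the unit
circle: there `1 - |B(w)|²` is comparable to `|B'(ζ)| (1 - |w|²)` with `B'(ζ) ≠ 0`, and the
Schwarz–Pick lemma bounds `|f'(w)| (1 - |w|²)` by `1 - |f(w)|²`.

A local maximum `p` of `V` with `V(p) ≥ 1` is very restrictive. By Möbius invariance one may assume
`f(p) = B(p) = 0`. Then `g = f - h(p) B` satisfies `g(p) = 0` and `g' = (h - h(p)) B'`, so `g`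
vanishes at `p` to at least the order of `h - h(p)`. Maximality gives
`|h| - |h(p)| ≤ k |h - h(p)|` near `p` with some `k < 1`, which an open map `h` violates at the
values `(1 + t) h(p)`, `t > 0`. So `h` is constant near `p`, that is `f = h(p) B`, and comparing
`1 - |f|²` with `1 - |B|²` shows that `|h(p)| = 1`.

If `V` exceeded `1` somewhere, it would attain a maximum greater than `1`, contradicting this; thus
`V ≤ 1`, and a point where equality holds is a maximum of `V`.
-/

open scoped Topology ComplexConjugate

local notation "𝔻" => ball (0 : ℂ) 1

/-! ### Orders of vanishing and analytic quotients -/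

lemma vOrder_eq_analyticOrderAt {F : ℂ → ℂ} {p : ℂ} (hF : AnalyticAt ℂ F p) :
    vOrder F p = analyticOrderAt F p := by
  refine ENat.eq_of_forall_natCast_le_iff fun m => ?_
  rw [natCast_le_analyticOrderAt_iff_iteratedDeriv_eq_zero hF, vOrder, le_sInf_iff,
    Set.forall_mem_image]
  simp only [Set.mem_ofPred_eq, Nat.cast_le]
  exact forall_congr' fun i => by rw [← not_imp_not, not_le, not_not]

section Quotient

variable {𝕜 : Type*} [NontriviallyNormedField 𝕜]

lemma exists_analyticOnNhd_eventuallyEq_mul {F G : 𝕜 → 𝕜} {U : Set 𝕜}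
    (hF : AnalyticOnNhd 𝕜 F U) (hG : AnalyticOnNhd 𝕜 G U)
    (hle : ∀ p ∈ U, analyticOrderAt G p ≤ analyticOrderAt F p) :
    ∃ h : 𝕜 → 𝕜, AnalyticOnNhd 𝕜 h U ∧ ∀ p ∈ U, F =ᶠ[𝓝 p] h * G := by
  have hmer : MeromorphicOn (F / G) U := hF.meromorphicOn.div hG.meromorphicOn
  set h := toMeromorphicNFOn (F / G) U
  have hh : AnalyticOnNhd 𝕜 h U := fun p hp => by
    rw [← (meromorphicNFOn_toMeromorphicNFOn (F / G) U
      hp).meromorphicOrderAt_nonneg_iff_analyticAt, meromorphicOrderAt_toMeromorphicNFOn hmer hp,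
      meromorphicOrderAt_div (hF p hp).meromorphicAt (hG p hp).meromorphicAt,
      (hF p hp).meromorphicOrderAt_eq, (hG p hp).meromorphicOrderAt_eq]
    have horder := hle p hp
    cases hGp : analyticOrderAt G p with
    | top => simp
    | coe m =>
      cases hFp : analyticOrderAt F p with
      | top => simp
      | coe k =>
        rw [hGp, hFp, Nat.cast_le] at horder
        rw [ENat.map_natCast, ENat.map_natCast, ← WithTop.LinearOrderedAddCommGroup.coe_sub]
        exact_mod_cast sub_nonneg.2 (Nat.cast_le (α := ℤ).2 horder)
  refine ⟨h, hh, fun p hp => ?_⟩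
  rw [← (hF p hp).continuousAt.eventuallyEq_nhds_iff_eventuallyEq_nhdsNE
    ((hh p hp).mul (hG p hp)).continuousAt]
  rcases (hG p hp).eventually_eq_zero_or_eventually_ne_zero with hG0 | hG0
  · have hF0 : ∀ᶠ w in 𝓝 p, F w = 0 := by
      rw [← analyticOrderAt_eq_top] at hG0 ⊢
      exact top_le_iff.1 (hG0 ▸ hle p hp)
    filter_upwards [nhdsWithin_le_nhds hG0, nhdsWithin_le_nhds hF0] with w hGw hFw
    simp [hGw, hFw]
  · filter_upwards [hG0, hmer.toMeromorphicNFOn_eq_self_on_nhdsNE hp] with w hGw hhw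
    change F w = toMeromorphicNFOn (F / G) U w * G w
    rw [hhw, Pi.div_apply, div_mul_cancel₀ _ hGw]

lemma exists_analyticAt_eventuallyEq_mul_of_deriv [CharZero 𝕜] [CompleteSpace 𝕜]
    {g u v : 𝕜 → 𝕜} {p : 𝕜}
    (hg : AnalyticAt 𝕜 g p) (hu : AnalyticAt 𝕜 u p) (hv : AnalyticAt 𝕜 v p)
    (hgp : g p = 0) (hderiv : deriv g =ᶠ[𝓝 p] u * v) :
    ∃ q : 𝕜 → 𝕜, AnalyticAt 𝕜 q p ∧ g =ᶠ[𝓝 p] q * u := by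
  have hle : analyticOrderAt u p ≤ analyticOrderAt g p := by
    have horder := hg.analyticOrderAt_deriv_add_one
    simp only [hgp, sub_zero] at horder
    rw [← horder, analyticOrderAt_congr hderiv, analyticOrderAt_mul hu hv, add_assoc]
    exact le_self_add
  obtain ⟨q, hq, hgq⟩ := exists_analyticOnNhd_eventuallyEq_mul (U := {p}) (F := g) (G := u)
    (by simpa [AnalyticOnNhd] using hg) (by simpa [AnalyticOnNhd] using hu) (by simpa using hle)
  exact ⟨q, hq p rfl, hgq p rfl⟩

end Quotient

/-! ### Involutions of the disk -/

/-- The involutive automorphism of the unit disk that exchanges `a` and `0`; it is also the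
Blaschke factor with zero `a`. -/
noncomputable def diskInvolution (a u : ℂ) : ℂ := (a - u) / (1 - conj a * u)

@[simp] lemma diskInvolution_self (a : ℂ) : diskInvolution a a = 0 := by simp [diskInvolution]

@[simp] lemma diskInvolution_zero_right (a : ℂ) : diskInvolution a 0 = a := by
  simp [diskInvolution]

lemma one_sub_sq_norm_pos_iff {E : Type*} [SeminormedAddCommGroup E] {u : E} :
    0 < 1 - ‖u‖ ^ 2 ↔ ‖u‖ < 1 := by
  rw [sub_pos, sq_lt_one_iff₀ (norm_nonneg u)]

lemma one_sub_conj_mul_ne_zero {a u : ℂ} (ha : ‖a‖ < 1) (hu : ‖u‖ ≤ 1) :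
    1 - conj a * u ≠ 0 := by
  intro h
  have hprod : ‖a‖ * ‖u‖ = 1 := by simpa using congrArg norm (sub_eq_zero.1 h).symm
  exact (mul_lt_one_of_nonneg_of_lt_one_left (norm_nonneg a) ha hu).ne hprod

lemma sq_norm_one_sub_conj_mul_sub_sq_norm_sub (a u : ℂ) :
    ‖1 - conj a * u‖ ^ 2 - ‖a - u‖ ^ 2 = (1 - ‖a‖ ^ 2) * (1 - ‖u‖ ^ 2) := by
  simp only [← Complex.normSq_eq_norm_sq, Complex.normSq_apply, Complex.sub_re, Complex.sub_im,
    Complex.mul_re, Complex.mul_im, Complex.conj_re, Complex.conj_im, Complex.one_re,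
    Complex.one_im]
  ring

section DiskInvolution

variable {a u : ℂ}

lemma one_sub_sq_norm_diskInvolution_eq_div (ha : ‖a‖ < 1) (hu : ‖u‖ ≤ 1) :
    1 - ‖diskInvolution a u‖ ^ 2 = (1 - ‖a‖ ^ 2) * (1 - ‖u‖ ^ 2) / ‖1 - conj a * u‖ ^ 2 := by
  have hden : ‖1 - conj a * u‖ ^ 2 ≠ 0 := by simpa using one_sub_conj_mul_ne_zero ha hu
  rw [diskInvolution, norm_div, div_pow, one_sub_div hden,
    sq_norm_one_sub_conj_mul_sub_sq_norm_sub]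

lemma norm_diskInvolution_lt_one (ha : ‖a‖ < 1) (hu : ‖u‖ < 1) : ‖diskInvolution a u‖ < 1 := by
  rw [← one_sub_sq_norm_pos_iff] at ha hu ⊢
  have hden := one_sub_conj_mul_ne_zero (one_sub_sq_norm_pos_iff.1 ha)
    (one_sub_sq_norm_pos_iff.1 hu).le
  rw [one_sub_sq_norm_diskInvolution_eq_div (one_sub_sq_norm_pos_iff.1 ha)
    (one_sub_sq_norm_pos_iff.1 hu).le]
  positivity

lemma norm_diskInvolution_eq_one (ha : ‖a‖ < 1) (hu : ‖u‖ = 1) : ‖diskInvolution a u‖ = 1 := by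
  have h := one_sub_sq_norm_diskInvolution_eq_div ha hu.le
  rw [hu, one_pow, sub_self, mul_zero, zero_div, sub_eq_zero, eq_comm] at h
  exact (pow_eq_one_iff_of_nonneg (norm_nonneg _) two_ne_zero).1 h

lemma analyticAt_diskInvolution (ha : ‖a‖ < 1) (hu : ‖u‖ ≤ 1) :
    AnalyticAt ℂ (diskInvolution a) u := by
  have hden := one_sub_conj_mul_ne_zero ha hu
  unfold diskInvolution
  fun_prop (disch := assumption)

lemma deriv_diskInvolution (ha : ‖a‖ < 1) (hu : ‖u‖ ≤ 1) :
    deriv (diskInvolution a) u = -(1 - ‖a‖ ^ 2 : ℝ) / (1 - conj a * u) ^ 2 := by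
  have h := ((hasDerivAt_id u).const_sub a).div
    (((hasDerivAt_id u).const_mul (conj a)).const_sub 1) (one_sub_conj_mul_ne_zero ha hu)
  rw [show deriv (diskInvolution a) u = _ from h.deriv]
  push_cast
  rw [← Complex.conj_mul']
  simp only [id_eq, mul_one]
  ring

lemma deriv_diskInvolution_ne_zero (ha : ‖a‖ < 1) (hu : ‖u‖ ≤ 1) :
    deriv (diskInvolution a) u ≠ 0 := by
  rw [deriv_diskInvolution ha hu]
  refine div_ne_zero (neg_ne_zero.2 ?_) (pow_ne_zero 2 (one_sub_conj_mul_ne_zero ha hu))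
  exact_mod_cast (one_sub_sq_norm_pos_iff.2 ha).ne'

lemma one_sub_sq_norm_diskInvolution (ha : ‖a‖ < 1) (hu : ‖u‖ ≤ 1) :
    1 - ‖diskInvolution a u‖ ^ 2 = ‖deriv (diskInvolution a) u‖ * (1 - ‖u‖ ^ 2) := by
  rw [one_sub_sq_norm_diskInvolution_eq_div ha hu, deriv_diskInvolution ha hu, norm_div, norm_neg,
    norm_pow, Complex.norm_of_nonneg (one_sub_sq_norm_pos_iff.2 ha).le]
  ring

lemma norm_deriv_diskInvolution_self_mul (ha : ‖a‖ < 1) :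
    ‖deriv (diskInvolution a) a‖ * (1 - ‖a‖ ^ 2) = 1 := by
  simpa using (one_sub_sq_norm_diskInvolution ha ha.le).symm

lemma diskInvolution_diskInvolution (ha : ‖a‖ < 1) (hu : ‖u‖ ≤ 1) :
    diskInvolution a (diskInvolution a u) = u := by
  have hden := one_sub_conj_mul_ne_zero ha hu
  have hden' := one_sub_conj_mul_ne_zero ha ha.le
  have h1 : a - diskInvolution a u = (1 - conj a * a) * u / (1 - conj a * u) := by
    rw [diskInvolution, eq_div_iff hden, sub_mul, div_mul_cancel₀ _ hden]
    ring
  have h2 : 1 - conj a * diskInvolution a u = (1 - conj a * a) / (1 - conj a * u) := by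
    rw [diskInvolution, eq_div_iff hden, sub_mul, mul_assoc, div_mul_cancel₀ _ hden]
    ring
  rw [diskInvolution, h1, h2, div_div_div_cancel_right₀ hden, mul_div_cancel_left₀ _ hden']

lemma diskInvolution_mul {c : ℂ} (a u : ℂ) (hc : ‖c‖ = 1) :
    diskInvolution a (c * u) = c * diskInvolution (conj c * a) u := by
  have hcc : c * conj c = 1 := by simp [Complex.mul_conj', hc]
  simp only [diskInvolution, map_mul, Complex.conj_conj, ← mul_div_assoc, mul_sub, ← mul_assoc,
    hcc, one_mul]
  rw [mul_comm c (conj a)]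

lemma exists_diskInvolution_comp_eq {b : ℂ} (ha : ‖a‖ < 1) (hb : ‖b‖ < 1) :
    ∃ τ z₀ : ℂ, ‖τ‖ = 1 ∧ ‖z₀‖ < 1 ∧ ∀ u : ℂ, ‖u‖ ≤ 1 →
      diskInvolution a (diskInvolution b u) = τ * diskInvolution z₀ u := by
  have hab := one_sub_conj_mul_ne_zero ha hb.le
  have hba := one_sub_conj_mul_ne_zero hb ha.le
  have hconj : conj (1 - conj a * b) = 1 - conj b * a := by simp [mul_comm]
  refine ⟨-((1 - conj b * a) / (1 - conj a * b)), diskInvolution b a, ?_,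
    norm_diskInvolution_lt_one hb ha, fun u hu => ?_⟩
  · rw [norm_neg, ← hconj, norm_div, Complex.norm_conj, div_self (norm_ne_zero_iff.2 hab)]
  have hbu := one_sub_conj_mul_ne_zero hb hu
  have hleft : diskInvolution a (diskInvolution b u) =
      ((a - b) + (1 - conj b * a) * u) / ((1 - conj a * b) + (conj a - conj b) * u) := by
    rw [diskInvolution, diskInvolution, ← mul_div_assoc, sub_div' hbu, sub_div' hbu,
      div_div_div_cancel_right₀ hbu]
    ring_nf
  have hright : diskInvolution (diskInvolution b a) u =
      ((b - a) - (1 - conj b * a) * u) / (1 - conj b * a) /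
        (((1 - conj a * b) + (conj a - conj b) * u) / (1 - conj a * b)) := by
    have hz₀ : conj (diskInvolution b a) = (conj b - conj a) / (1 - conj a * b) := by
      rw [diskInvolution, map_div₀, ← hconj, Complex.conj_conj, map_sub]
    rw [diskInvolution, hz₀, diskInvolution, div_sub' hba, div_mul_eq_mul_div, one_sub_div hab]
    ring_nf
  rw [hleft, hright]
  generalize (1 - conj a * b) + (conj a - conj b) * u = d
  generalize 1 - conj a * b = q at hab ⊢
  generalize 1 - conj b * a = r at hba ⊢
  field_simp
  ring

end DiskInvolution

/-! ### Local maxima of the ratio of pulled-back hyperbolic metrics -/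

/-- The ratio of the pullbacks under `f` and `B` of the hyperbolic density `1 / (1 - |u|²)`, when
`f' = h B'`. Using the quotient `h` instead of `f' / B'` gives the correct value at critical points
of `B`. -/
noncomputable def hypRatio (f B h : ℂ → ℂ) (w : ℂ) : ℝ :=
  ‖h w‖ * (1 - ‖B w‖ ^ 2) / (1 - ‖f w‖ ^ 2)

lemma eventually_eq_of_norm_sub_norm_le {E : Type*} [NormedAddCommGroup E] [NormedSpace ℂ E]
    {h : E → ℂ} {p : E} {k : ℝ} (hh : AnalyticAt ℂ h p) (hk : k < 1)
    (hle : ∀ᶠ w in 𝓝 p, ‖h w‖ - ‖h p‖ ≤ k * ‖h w - h p‖) : ∀ᶠ w in 𝓝 p, h w = h p := by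
  refine hh.eventually_constant_or_nhds_le_map_nhds.resolve_right fun hopen => ?_
  have himage : ∀ᶠ v in 𝓝 (h p), ‖v‖ - ‖h p‖ ≤ k * ‖v - h p‖ :=
    hopen hle
  set e := Complex.exp (Complex.arg (h p) * Complex.I)
  have he : ‖e‖ = 1 := Complex.norm_exp_ofReal_mul_I _
  have hray : Tendsto (fun t : ℝ => h p + t * e) (𝓝[>] 0) (𝓝 (h p)) := by
    have hcont : Continuous fun t : ℝ => h p + t * e := by fun_prop
    simpa using (hcont.tendsto 0).mono_left nhdsWithin_le_nhds
  obtain ⟨t, ht, htpos : 0 < t⟩ := ((hray.eventually himage).and self_mem_nhdsWithin).exists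
  have hnorm : ‖h p + t * e‖ = ‖h p‖ + t := by
    nth_rw 1 [← Complex.norm_mul_exp_arg_mul_I (h p)]
    rw [← add_mul, norm_mul, he, mul_one, ← Complex.ofReal_add, Complex.norm_of_nonneg]
    positivity
  rw [hnorm, add_sub_cancel_left, add_sub_cancel_left, norm_mul, he, mul_one,
    Complex.norm_of_nonneg htpos.le] at ht
  nlinarith

section LocalMax

variable {f B h : ℂ → ℂ} {p : ℂ}

lemma exists_eventually_sub_mul_eq_mul_sub (hf : AnalyticAt ℂ f p) (hB : AnalyticAt ℂ B p)
    (hh : AnalyticAt ℂ h p) (hderiv : deriv f =ᶠ[𝓝 p] h * deriv B) (hfp : f p = 0)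
    (hBp : B p = 0) :
    ∃ q : ℂ → ℂ, AnalyticAt ℂ q p ∧ ∀ᶠ w in 𝓝 p, f w - h p * B w = q w * (h w - h p) := by
  refine exists_analyticAt_eventuallyEq_mul_of_deriv (g := fun w => f w - h p * B w)
    (hf.sub (analyticAt_const.mul hB)) (hh.sub analyticAt_const) hB.deriv (by simp [hfp, hBp]) ?_
  filter_upwards [hderiv, hf.eventually_analyticAt, hB.eventually_analyticAt] with w hw hfw hBw
  rw [deriv_fun_sub hfw.differentiableAt (hBw.differentiableAt.const_mul _),
    deriv_const_mul _ hBw.differentiableAt, hw]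
  simp only [Pi.mul_apply]
  ring

lemma eventually_mul_one_sub_sq_norm_le (hf : ContinuousAt f p) (hfp : f p = 0) (hBp : B p = 0)
    (hmax : IsLocalMax (hypRatio f B h) p) :
    ∀ᶠ w in 𝓝 p, ‖h w‖ * (1 - ‖B w‖ ^ 2) ≤ ‖h p‖ * (1 - ‖f w‖ ^ 2) := by
  have hpos : ∀ᶠ w in 𝓝 p, ‖f w‖ < 1 := hf.norm.eventually_lt_const (by simp [hfp])
  filter_upwards [hmax, hpos] with w hw hfw
  simpa [hypRatio, hfp, hBp, div_le_iff₀ (one_sub_sq_norm_pos_iff.2 hfw)] using hw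

lemma eventually_norm_sub_norm_le_of_isLocalMax (hf : AnalyticAt ℂ f p) (hB : AnalyticAt ℂ B p)
    (hh : AnalyticAt ℂ h p) (hderiv : deriv f =ᶠ[𝓝 p] h * deriv B) (hfp : f p = 0)
    (hBp : B p = 0) (hmax : IsLocalMax (hypRatio f B h) p) (hone : 1 ≤ ‖h p‖) :
    ∀ᶠ w in 𝓝 p, ‖h w‖ - ‖h p‖ ≤ 1 / 2 * ‖h w - h p‖ := by
  obtain ⟨q, hq, hfq⟩ := exists_eventually_sub_mul_eq_mul_sub hf hB hh hderiv hfp hBp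
  have hfc := hf.continuousAt
  have hBc := hB.continuousAt
  have hqc := hq.continuousAt
  have hsmall : ∀ᶠ w in 𝓝 p, ‖h p‖ * (‖q w‖ * (‖h p * B w‖ + ‖f w‖)) < 1 / 4 := by
    have hcont : ContinuousAt (fun w => ‖h p‖ * (‖q w‖ * (‖h p * B w‖ + ‖f w‖))) p := by fun_prop
    exact hcont.eventually_lt_const (by simp [hfp, hBp])
  have hhalf : ∀ᶠ w in 𝓝 p, ‖B w‖ ^ 2 < 1 / 2 :=
    (hBc.norm.pow 2).eventually_lt_const (by simp [hBp])
  filter_upwards [eventually_mul_one_sub_sq_norm_le hfc hfp hBp hmax, hfq, hsmall, hhalf]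
    with w hle hfqw hw hBw
  have hBle : ‖B w‖ ≤ ‖h p * B w‖ := by
    rw [norm_mul]
    exact le_mul_of_one_le_left (norm_nonneg _) hone
  have hdist : ‖h p * B w‖ - ‖f w‖ ≤ ‖q w‖ * ‖h w - h p‖ := by
    rw [← norm_mul, ← hfqw, norm_sub_rev]
    exact norm_sub_norm_le _ _
  have hbound : (‖h w‖ - ‖h p‖) * (1 - ‖B w‖ ^ 2) ≤ 1 / 4 * ‖h w - h p‖ :=
    calc (‖h w‖ - ‖h p‖) * (1 - ‖B w‖ ^ 2)
      _ ≤ ‖h p‖ * (‖B w‖ ^ 2 - ‖f w‖ ^ 2) := by linarith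
      _ ≤ ‖h p‖ * (‖h p * B w‖ ^ 2 - ‖f w‖ ^ 2) := by gcongr
      _ = ‖h p‖ * ((‖h p * B w‖ - ‖f w‖) * (‖h p * B w‖ + ‖f w‖)) := by ring
      _ ≤ ‖h p‖ * (‖q w‖ * ‖h w - h p‖ * (‖h p * B w‖ + ‖f w‖)) := by gcongr
      _ = ‖h p‖ * (‖q w‖ * (‖h p * B w‖ + ‖f w‖)) * ‖h w - h p‖ := by ring
      _ ≤ 1 / 4 * ‖h w - h p‖ := by gcongr
  rcases le_total ‖h w‖ ‖h p‖ with hcase | hcase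
  · exact (sub_nonpos.2 hcase).trans (by positivity)
  · nlinarith

lemma norm_eq_one_and_eventually_eq_mul_of_isLocalMax (hf : AnalyticAt ℂ f p)
    (hB : AnalyticAt ℂ B p) (hh : AnalyticAt ℂ h p) (hderiv : deriv f =ᶠ[𝓝 p] h * deriv B)
    (hfp : f p = 0) (hBp : B p = 0) (hB0 : ∃ᶠ w in 𝓝 p, B w ≠ 0)
    (hmax : IsLocalMax (hypRatio f B h) p) (hone : 1 ≤ ‖h p‖) :
    ‖h p‖ = 1 ∧ ∀ᶠ w in 𝓝 p, f w = h p * B w := by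
  have hconst : ∀ᶠ w in 𝓝 p, h w = h p := eventually_eq_of_norm_sub_norm_le hh one_half_lt_one
    (eventually_norm_sub_norm_le_of_isLocalMax hf hB hh hderiv hfp hBp hmax hone)
  have hfB : ∀ᶠ w in 𝓝 p, f w = h p * B w := by
    obtain ⟨q, -, hfq⟩ := exists_eventually_sub_mul_eq_mul_sub hf hB hh hderiv hfp hBp
    filter_upwards [hfq, hconst] with w hfqw hw
    rwa [hw, sub_self, mul_zero, sub_eq_zero] at hfqw
  refine ⟨hone.antisymm' ?_, hfB⟩
  obtain ⟨w, hBw, hw, hle, hfw⟩ := (hB0.and_eventually (hconst.and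
    ((eventually_mul_one_sub_sq_norm_le hf.continuousAt hfp hBp hmax).and hfB))).exists
  rw [hw, hfw, norm_mul, mul_pow, mul_le_mul_iff_of_pos_left (by linarith),
    sub_le_sub_iff_left] at hle
  exact (sq_le_one_iff₀ (norm_nonneg _)).1
    ((mul_le_iff_le_one_left (by positivity)).1 hle)

end LocalMax

section MobiusInvariance

variable {f B h : ℂ → ℂ} {a b : ℂ}

lemma hypRatio_diskInvolution_comp {w : ℂ} (ha : ‖a‖ < 1) (hb : ‖b‖ < 1) (hfw : ‖f w‖ < 1)
    (hBw : ‖B w‖ < 1) :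
    hypRatio (diskInvolution a ∘ f) (diskInvolution b ∘ B)
      (fun w => h w * deriv (diskInvolution a) (f w) / deriv (diskInvolution b) (B w)) w =
      hypRatio f B h w := by
  have hda := norm_ne_zero_iff.2 (deriv_diskInvolution_ne_zero ha hfw.le)
  have hdb := norm_ne_zero_iff.2 (deriv_diskInvolution_ne_zero hb hBw.le)
  simp only [hypRatio, Function.comp_apply, one_sub_sq_norm_diskInvolution ha hfw.le,
    one_sub_sq_norm_diskInvolution hb hBw.le, norm_mul, norm_div]
  field_simp

lemma deriv_diskInvolution_comp {w : ℂ} (ha : ‖a‖ < 1) (hf : DifferentiableAt ℂ f w)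
    (hfw : ‖f w‖ ≤ 1) :
    deriv (diskInvolution a ∘ f) w = deriv (diskInvolution a) (f w) * deriv f w :=
  deriv_comp w (analyticAt_diskInvolution ha hfw).differentiableAt hf

theorem hypRatio_eq_one_and_exists_eventually_of_isLocalMax {p : ℂ} (hf : AnalyticAt ℂ f p)
    (hB : AnalyticAt ℂ B p) (hh : AnalyticAt ℂ h p) (hderiv : deriv f =ᶠ[𝓝 p] h * deriv B)
    (hfp : ‖f p‖ < 1) (hBp : ‖B p‖ < 1) (hBne : ∃ᶠ w in 𝓝 p, B w ≠ B p)
    (hmax : IsLocalMax (hypRatio f B h) p) (hone : 1 ≤ hypRatio f B h p) :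
    hypRatio f B h p = 1 ∧ ∃ c : ℂ, ‖c‖ = 1 ∧
      ∀ᶠ w in 𝓝 p, diskInvolution (f p) (f w) = c * diskInvolution (B p) (B w) := by
  set F := diskInvolution (f p) ∘ f
  set G := diskInvolution (B p) ∘ B
  set k : ℂ → ℂ := fun w =>
    h w * deriv (diskInvolution (f p)) (f w) / deriv (diskInvolution (B p)) (B w)
  have hφf := analyticAt_diskInvolution hfp hfp.le
  have hφB := analyticAt_diskInvolution hBp hBp.le
  have hk : AnalyticAt ℂ k p := (hh.mul (hφf.deriv.comp hf)).div (hφB.deriv.comp hB)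
    (deriv_diskInvolution_ne_zero hBp hBp.le)
  have hfw : ∀ᶠ w in 𝓝 p, ‖f w‖ < 1 := hf.continuousAt.norm.eventually_lt_const hfp
  have hBw : ∀ᶠ w in 𝓝 p, ‖B w‖ < 1 := hB.continuousAt.norm.eventually_lt_const hBp
  have hratio : hypRatio F G k =ᶠ[𝓝 p] hypRatio f B h := by
    filter_upwards [hfw, hBw] with w using hypRatio_diskInvolution_comp hfp hBp
  have hkp : ‖k p‖ = hypRatio f B h p := by
    simpa [hypRatio, F, G] using hratio.self_of_nhds
  have hderivFG : deriv F =ᶠ[𝓝 p] k * deriv G := by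
    filter_upwards [hderiv, hf.eventually_analyticAt, hB.eventually_analyticAt, hfw, hBw]
      with w hw hfa hBa hfw hBw
    have hne := deriv_diskInvolution_ne_zero hBp hBw.le
    rw [Pi.mul_apply, deriv_diskInvolution_comp hfp hfa.differentiableAt hfw.le,
      deriv_diskInvolution_comp hBp hBa.differentiableAt hBw.le, hw, Pi.mul_apply]
    simp only [k]
    field_simp
  have hG0 : ∃ᶠ w in 𝓝 p, G w ≠ 0 := by
    refine (hBne.and_eventually hBw).mono fun w ⟨hne, hlt⟩ h0 => hne ?_
    change diskInvolution (B p) (B w) = 0 at h0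
    rw [← diskInvolution_diskInvolution hBp hlt.le, h0, diskInvolution_zero_right]
  obtain ⟨hk1, hFG⟩ := norm_eq_one_and_eventually_eq_mul_of_isLocalMax (hφf.comp hf)
    (hφB.comp hB) hk hderivFG (diskInvolution_self _) (diskInvolution_self _) hG0
    (hmax.congr (hratio.mono fun w => Eq.symm)) (hkp ▸ hone)
  exact ⟨hkp ▸ hk1, k p, hk1, hFG⟩

end MobiusInvariance

/-! ### The Schwarz–Pick lemma -/

section SchwarzPick

variable {f : ℂ → ℂ} {z w : ℂ}

lemma mapsTo_diskInvolution (hz : ‖z‖ < 1) : Set.MapsTo (diskInvolution z) 𝔻 𝔻 := fun u hu => by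
  rw [mem_ball_zero_iff] at hu ⊢
  exact norm_diskInvolution_lt_one hz hu

lemma differentiableOn_diskInvolution (hz : ‖z‖ < 1) :
    DifferentiableOn ℂ (diskInvolution z) 𝔻 := fun _ hu =>
  (analyticAt_diskInvolution hz
    (mem_ball_zero_iff.1 hu).le).differentiableAt.differentiableWithinAt

lemma norm_diskInvolution_le_of_mapsTo (hf : DifferentiableOn ℂ f 𝔻) (hmaps : Set.MapsTo f 𝔻 𝔻)
    (hz : ‖z‖ < 1) (hw : ‖w‖ < 1) :
    ‖diskInvolution (f z) (f w)‖ ≤ ‖diskInvolution z w‖ := by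
  have hfz : ‖f z‖ < 1 := mem_ball_zero_iff.1 (hmaps (mem_ball_zero_iff.2 hz))
  have hsch := Complex.norm_le_norm_of_mapsTo_ball
    (f := diskInvolution (f z) ∘ f ∘ diskInvolution z) (z := diskInvolution z w)
    ((differentiableOn_diskInvolution hfz).comp
      (hf.comp (differentiableOn_diskInvolution hz) (mapsTo_diskInvolution hz))
      (hmaps.comp (mapsTo_diskInvolution hz)))
    (((mapsTo_diskInvolution hfz).comp
      (hmaps.comp (mapsTo_diskInvolution hz))).mono_right ball_subset_closedBall)
    (by simp) (norm_diskInvolution_lt_one hz hw)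
  simpa [diskInvolution_diskInvolution hz hw.le] using hsch

lemma norm_deriv_mul_one_sub_sq_norm_le (hf : DifferentiableOn ℂ f 𝔻)
    (hmaps : Set.MapsTo f 𝔻 𝔻) (hz : ‖z‖ < 1) :
    ‖deriv f z‖ * (1 - ‖z‖ ^ 2) ≤ 1 - ‖f z‖ ^ 2 := by
  have hfz : ‖f z‖ < 1 := mem_ball_zero_iff.1 (hmaps (mem_ball_zero_iff.2 hz))
  have hsch := Complex.norm_deriv_le_one_of_mapsTo_ball
    (f := diskInvolution (f z) ∘ f ∘ diskInvolution z) (c := 0) (R := 1)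
    ((differentiableOn_diskInvolution hfz).comp
      (hf.comp (differentiableOn_diskInvolution hz) (mapsTo_diskInvolution hz))
      (hmaps.comp (mapsTo_diskInvolution hz)))
    (by simpa using ((mapsTo_diskInvolution hfz).comp
      (hmaps.comp (mapsTo_diskInvolution hz))).mono_right ball_subset_closedBall) one_pos
  have hz' := mem_ball_zero_iff.2 hz
  have hderiv : HasDerivAt (diskInvolution (f z) ∘ f ∘ diskInvolution z)
      (deriv (diskInvolution (f z)) (f z) * (deriv f z * deriv (diskInvolution z) 0)) 0 := by
    have hφz := (analyticAt_diskInvolution hz (u := 0) (by simp)).differentiableAt.hasDerivAt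
    have hφf := (analyticAt_diskInvolution hfz hfz.le).differentiableAt.hasDerivAt
    exact hφf.comp_of_eq 0 ((hf.differentiableAt
      (isOpen_ball.mem_nhds hz')).hasDerivAt.comp_of_eq 0 hφz (by simp)) (by simp)
  have hφz : ‖deriv (diskInvolution z) 0‖ = 1 - ‖z‖ ^ 2 := by
    simpa using (one_sub_sq_norm_diskInvolution hz (u := 0) (by simp)).symm
  rw [hderiv.deriv, norm_mul, norm_mul, hφz] at hsch
  have hpos := one_sub_sq_norm_pos_iff.2 hfz
  calc ‖deriv f z‖ * (1 - ‖z‖ ^ 2)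
    _ = ‖deriv (diskInvolution (f z)) (f z)‖ * (‖deriv f z‖ * (1 - ‖z‖ ^ 2)) *
        (1 - ‖f z‖ ^ 2) := by
      rw [mul_right_comm, norm_deriv_diskInvolution_self_mul hfz, one_mul]
    _ ≤ 1 * (1 - ‖f z‖ ^ 2) := by gcongr
    _ = 1 - ‖f z‖ ^ 2 := one_mul _

lemma one_sub_norm_mul_one_sub_sq_norm_le (hf : DifferentiableOn ℂ f 𝔻)
    (hmaps : Set.MapsTo f 𝔻 𝔻) (hw : ‖w‖ < 1) :
    (1 - ‖f 0‖) * (1 - ‖w‖ ^ 2) ≤ (1 + ‖f 0‖) * (1 - ‖f w‖ ^ 2) := by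
  have hf0 : ‖f 0‖ < 1 := mem_ball_zero_iff.1 (hmaps (mem_ball_self one_pos))
  have hfw : ‖f w‖ < 1 := mem_ball_zero_iff.1 (hmaps (mem_ball_zero_iff.2 hw))
  have hden : 1 - ‖f 0‖ ≤ ‖1 - conj (f 0) * f w‖ := by
    have h := norm_sub_norm_le 1 (conj (f 0) * f w)
    rw [norm_one, norm_mul, Complex.norm_conj] at h
    nlinarith [norm_nonneg (f 0)]
  have hpick : (1 - ‖w‖ ^ 2) * ‖1 - conj (f 0) * f w‖ ^ 2 ≤ (1 - ‖f 0‖ ^ 2) * (1 - ‖f w‖ ^ 2) := by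
    rw [← le_div_iff₀ (by nlinarith), ← one_sub_sq_norm_diskInvolution_eq_div hf0 hfw.le]
    have h := norm_diskInvolution_le_of_mapsTo hf hmaps (z := 0) (by simp) hw
    have hzero : ‖diskInvolution 0 w‖ = ‖w‖ := by simp [diskInvolution]
    rw [hzero] at h
    gcongr
  refine le_of_mul_le_mul_left ?_ (sub_pos.2 hf0)
  calc (1 - ‖f 0‖) * ((1 - ‖f 0‖) * (1 - ‖w‖ ^ 2))
    _ = (1 - ‖w‖ ^ 2) * (1 - ‖f 0‖) ^ 2 := by ring
    _ ≤ (1 - ‖w‖ ^ 2) * ‖1 - conj (f 0) * f w‖ ^ 2 := by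
      have := one_sub_sq_norm_pos_iff.2 hw
      gcongr
    _ ≤ (1 - ‖f 0‖) * ((1 + ‖f 0‖) * (1 - ‖f w‖ ^ 2)) := by linarith

end SchwarzPick

/-! ### Boundary behaviour -/

lemma exists_isMaxOn_of_eventually_lt {X α : Type*} [TopologicalSpace X] [LinearOrder α]
    [TopologicalSpace α] [OrderClosedTopology α] {U : Set X} {V : X → α} {p₀ : X}
    (hU : IsCompact (closure U)) (hV : ContinuousOn V U) (hp₀ : p₀ ∈ U)
    (hlt : ∀ ζ ∈ closure U \ U, ∀ᶠ w in 𝓝[U] ζ, V w < V p₀) : ∃ p ∈ U, IsMaxOn V U p := by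
  set K := {w ∈ U | V p₀ ≤ V w}
  have hKU : K ⊆ U := Set.sep_subset _ _
  have hK : IsClosed K := by
    refine isClosed_of_closure_subset fun ζ hζ => ?_
    have : (𝓝[K] ζ).NeBot := mem_closure_iff_nhdsWithin_neBot.1 hζ
    have hle : ∀ᶠ w in 𝓝[K] ζ, V p₀ ≤ V w := eventually_mem_nhdsWithin.mono fun w hw => hw.2
    by_cases hζU : ζ ∈ U
    · exact ⟨hζU, ge_of_tendsto ((hV ζ hζU).mono hKU) hle⟩
    · obtain ⟨w, hw, hw'⟩ := (hle.and
        (nhdsWithin_mono ζ hKU (hlt ζ ⟨closure_mono hKU hζ, hζU⟩))).exists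
      exact (hw.not_gt hw').elim
  obtain ⟨p, hp, hmax⟩ := (hU.of_isClosed_subset hK (hKU.trans subset_closure)).exists_isMaxOn
    ⟨p₀, hp₀, le_rfl⟩ (hV.mono hKU)
  refine ⟨p, hp.1, fun w hw => ?_⟩
  rcases le_total (V p₀) (V w) with hle | hle
  exacts [hmax ⟨hw, hle⟩, hle.trans hp.2]

/-- A proper holomorphic self-map of the unit disk, extended holomorphically across the unit circle.
These are exactly the nonconstant finite Blaschke products. -/
structure IsProperDiskMap (B : ℂ → ℂ) : Prop where
  analyticOnNhd : AnalyticOnNhd ℂ B (closedBall 0 1)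
  mapsTo_ball : Set.MapsTo B 𝔻 𝔻
  mapsTo_sphere : Set.MapsTo B (sphere 0 1) (sphere 0 1)

lemma eventually_one_sub_norm_le_mul {E : Type*} [NormedAddCommGroup E] [NormedSpace ℝ E]
    {F : Type*} [SeminormedAddCommGroup F] {B : E → F} {ζ : E} {K : NNReal} (hζ : ‖ζ‖ = 1)
    (hB : ∃ s ∈ 𝓝 ζ, LipschitzOnWith K B s) (hsphere : ∀ w, ‖w‖ = 1 → ‖B w‖ = 1) :
    ∀ᶠ w in 𝓝[ball 0 1] ζ, 1 - ‖B w‖ ≤ K * (1 - ‖w‖) := by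
  obtain ⟨s, hs, hlip⟩ := hB
  have hproj : Tendsto (fun w : E => ‖w‖⁻¹ • w) (𝓝 ζ) (𝓝 ζ) := by
    have hcont : ContinuousAt (fun w : E => ‖w‖⁻¹ • w) ζ :=
      (continuousAt_id.norm.inv₀ (by simp [hζ])).smul continuousAt_id
    simpa [ContinuousAt, hζ] using hcont
  have hne : ∀ᶠ w in 𝓝 ζ, ‖w‖ ≠ 0 := continuous_norm.continuousAt.eventually_ne (by simp [hζ])
  filter_upwards [nhdsWithin_le_nhds hs, nhdsWithin_le_nhds (hproj hs), nhdsWithin_le_nhds hne,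
    self_mem_nhdsWithin] with w hws hpws hw0 hw
  have hunit : ‖‖w‖⁻¹ • w‖ = 1 := by rw [norm_smul, norm_inv, norm_norm, inv_mul_cancel₀ hw0]
  have hdist : ‖‖w‖⁻¹ • w - w‖ = 1 - ‖w‖ := by
    have hw1 : 1 ≤ ‖w‖⁻¹ := (one_le_inv₀ (by positivity)).2 (mem_ball_zero_iff.1 hw).le
    have hsub : ‖w‖⁻¹ • w - w = (‖w‖⁻¹ - 1) • w := by rw [sub_smul, one_smul]
    rw [hsub, norm_smul, Real.norm_of_nonneg (sub_nonneg.2 hw1), sub_mul,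
      inv_mul_cancel₀ hw0, one_mul]
  calc 1 - ‖B w‖
    _ = ‖B (‖w‖⁻¹ • w)‖ - ‖B w‖ := by rw [hsphere _ hunit]
    _ ≤ ‖B (‖w‖⁻¹ • w) - B w‖ := norm_sub_norm_le _ _
    _ ≤ K * ‖‖w‖⁻¹ • w - w‖ := hlip.norm_sub_le hpws hws
    _ = K * (1 - ‖w‖) := by rw [hdist]

namespace IsProperDiskMap

variable {B : ℂ → ℂ} {ζ : ℂ}

lemma differentiableOn (hB : IsProperDiskMap B) : DifferentiableOn ℂ B 𝔻 :=
  hB.analyticOnNhd.differentiableOn.mono ball_subset_closedBall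

lemma norm_lt_one (hB : IsProperDiskMap B) {w : ℂ} (hw : ‖w‖ < 1) : ‖B w‖ < 1 :=
  mem_ball_zero_iff.1 (hB.mapsTo_ball (mem_ball_zero_iff.2 hw))

lemma analyticAt (hB : IsProperDiskMap B) {w : ℂ} (hw : ‖w‖ ≤ 1) : AnalyticAt ℂ B w :=
  hB.analyticOnNhd w (mem_closedBall_zero_iff.2 hw)

lemma eventually_one_sub_sq_norm_le (hB : IsProperDiskMap B) (hζ : ‖ζ‖ = 1) {L : ℝ}
    (hL : ‖deriv B ζ‖ < L) :
    ∀ᶠ w in 𝓝[𝔻] ζ, 1 - ‖B w‖ ^ 2 ≤ L * (1 - ‖w‖ ^ 2) := by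
  obtain ⟨K, hBK, hKL⟩ := exists_between hL
  lift K to NNReal using (norm_nonneg _).trans hBK.le
  have hlip := (hB.analyticAt hζ.le).hasStrictDerivAt.hasStrictFDerivAt
    |>.exists_lipschitzOnWith_of_nnnorm_lt K (by simpa [← NNReal.coe_lt_coe] using hBK)
  have hradial := eventually_one_sub_norm_le_mul hζ hlip fun w hw =>
    mem_sphere_zero_iff_norm.1 (hB.mapsTo_sphere (mem_sphere_zero_iff_norm.2 hw))
  have hlim : ∀ᶠ w in 𝓝[𝔻] ζ, 2 * (K : ℝ) < L * (1 + ‖w‖) := by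
    have hcont : ContinuousAt (fun w : ℂ => L * (1 + ‖w‖)) ζ := by fun_prop
    exact nhdsWithin_le_nhds (hcont.eventually_const_lt (by simp only [hζ]; linarith))
  filter_upwards [hradial, hlim, self_mem_nhdsWithin] with w hrw hlw hw
  rw [mem_ball_zero_iff] at hw
  have hBw := hB.norm_lt_one hw
  calc 1 - ‖B w‖ ^ 2
    _ = (1 - ‖B w‖) * (1 + ‖B w‖) := by ring
    _ ≤ K * (1 - ‖w‖) * 2 := by gcongr; linarith
    _ = (2 * K) * (1 - ‖w‖) := by ring
    _ ≤ L * (1 + ‖w‖) * (1 - ‖w‖) := by gcongr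
    _ = L * (1 - ‖w‖ ^ 2) := by ring

lemma deriv_ne_zero_of_norm_eq_one (hB : IsProperDiskMap B) (hζ : ‖ζ‖ = 1) : deriv B ζ ≠ 0 := by
  intro hderiv
  have hB0 : ‖B 0‖ < 1 := hB.norm_lt_one (by simp)
  have : (𝓝[𝔻] ζ).NeBot := mem_closure_iff_nhdsWithin_neBot.1 <| by
    simp [closure_ball, hζ]
  have hL : ‖deriv B ζ‖ < (1 - ‖B 0‖) / 4 := by
    rw [hderiv, norm_zero]
    linarith
  obtain ⟨w, hw, hwball⟩ :=
    ((hB.eventually_one_sub_sq_norm_le hζ hL).and self_mem_nhdsWithin).exists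
  have hw1 := mem_ball_zero_iff.1 hwball
  have hhopf := one_sub_norm_mul_one_sub_sq_norm_le hB.differentiableOn hB.mapsTo_ball hw1
  have hpos : 0 < (1 - ‖B 0‖) * (1 - ‖w‖ ^ 2) :=
    mul_pos (sub_pos.2 hB0) (one_sub_sq_norm_pos_iff.2 hw1)
  have hBw := one_sub_sq_norm_pos_iff.2 (hB.norm_lt_one hw1)
  have hhalf : (1 - ‖B 0‖) * (1 - ‖w‖ ^ 2) ≤ 1 / 2 * ((1 - ‖B 0‖) * (1 - ‖w‖ ^ 2)) :=
    calc (1 - ‖B 0‖) * (1 - ‖w‖ ^ 2)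
      _ ≤ (1 + ‖B 0‖) * (1 - ‖B w‖ ^ 2) := hhopf
      _ ≤ 2 * (1 - ‖B w‖ ^ 2) := by gcongr; linarith
      _ ≤ 2 * ((1 - ‖B 0‖) / 4 * (1 - ‖w‖ ^ 2)) := by gcongr
      _ = 1 / 2 * ((1 - ‖B 0‖) * (1 - ‖w‖ ^ 2)) := by ring
  linarith [hpos]

lemma eventually_hypRatio_le (hB : IsProperDiskMap B) {f h : ℂ → ℂ}
    (hf : DifferentiableOn ℂ f 𝔻) (hmaps : Set.MapsTo f 𝔻 𝔻)
    (hderiv : Set.EqOn (deriv f) (h * deriv B) 𝔻) (hζ : ‖ζ‖ = 1) {M : ℝ} (hM : 1 < M) :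
    ∀ᶠ w in 𝓝[𝔻] ζ, hypRatio f B h w ≤ M := by
  have hζpos : 0 < ‖deriv B ζ‖ := norm_pos_iff.2 (hB.deriv_ne_zero_of_norm_eq_one hζ)
  obtain ⟨L, hBL, hLM⟩ := exists_between (lt_mul_of_one_lt_left hζpos hM)
  have hLw : ∀ᶠ w in 𝓝[𝔻] ζ, L < M * ‖deriv B w‖ :=
    nhdsWithin_le_nhds <|
      ((hB.analyticAt hζ.le).deriv.continuousAt.norm.const_mul M).eventually_const_lt hLM
  filter_upwards [hB.eventually_one_sub_sq_norm_le hζ hBL, hLw, self_mem_nhdsWithin]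
    with w hBw hLw hw
  have hpick := norm_deriv_mul_one_sub_sq_norm_le hf hmaps (mem_ball_zero_iff.1 hw)
  have hw1 := one_sub_sq_norm_pos_iff.2 (mem_ball_zero_iff.1 hw)
  rw [hderiv hw, Pi.mul_apply, norm_mul] at hpick
  rw [hypRatio, div_le_iff₀ (one_sub_sq_norm_pos_iff.2 (mem_ball_zero_iff.1 (hmaps hw)))]
  calc ‖h w‖ * (1 - ‖B w‖ ^ 2)
    _ ≤ ‖h w‖ * (M * ‖deriv B w‖ * (1 - ‖w‖ ^ 2)) := by
      gcongr
      exact hBw.trans (by gcongr)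
    _ = M * (‖h w‖ * ‖deriv B w‖ * (1 - ‖w‖ ^ 2)) := by ring
    _ ≤ M * (1 - ‖f w‖ ^ 2) := by gcongr

end IsProperDiskMap

/-! ### The Nehari–Schwarz lemma and its equality case -/

section NehariSchwarz

variable {f B h : ℂ → ℂ}

namespace IsProperDiskMap

lemma frequently_ne (hB : IsProperDiskMap B) {p : ℂ} (hp : ‖p‖ < 1) :
    ∃ᶠ w in 𝓝 p, B w ≠ B p := by
  intro hconst
  have heq : Set.EqOn B (fun _ => B p) (closedBall 0 1) :=
    hB.analyticOnNhd.eqOn_of_preconnected_of_eventuallyEq analyticOnNhd_const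
      (convex_closedBall 0 1).isPreconnected (mem_closedBall_zero_iff.2 hp.le)
      (hconst.mono fun _ => not_not.1)
  have hnorm : ‖B 1‖ = 1 := mem_sphere_zero_iff_norm.1 (hB.mapsTo_sphere (by simp))
  rw [heq (by simp : (1 : ℂ) ∈ closedBall 0 1)] at hnorm
  exact (hB.norm_lt_one hp).ne hnorm

lemma hypRatio_eq_one_and_exists_eventually_of_isMaxOn (hB : IsProperDiskMap B)
    (hf : DifferentiableOn ℂ f 𝔻) (hmaps : Set.MapsTo f 𝔻 𝔻)
    (hh : AnalyticOnNhd ℂ h 𝔻) (hderiv : Set.EqOn (deriv f) (h * deriv B) 𝔻) {p : ℂ} (hp : p ∈ 𝔻)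
    (hmax : IsMaxOn (hypRatio f B h) 𝔻 p) (hone : 1 ≤ hypRatio f B h p) :
    hypRatio f B h p = 1 ∧ ∃ c : ℂ, ‖c‖ = 1 ∧
      ∀ᶠ w in 𝓝 p, diskInvolution (f p) (f w) = c * diskInvolution (B p) (B w) := by
  have hp1 := mem_ball_zero_iff.1 hp
  have hnhds := isOpen_ball.mem_nhds hp
  exact hypRatio_eq_one_and_exists_eventually_of_isLocalMax
    (hf.analyticOnNhd isOpen_ball p hp) (hB.analyticAt hp1.le) (hh p hp)
    (hderiv.eventuallyEq_of_mem hnhds) (mem_ball_zero_iff.1 (hmaps hp)) (hB.norm_lt_one hp1)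
    (hB.frequently_ne hp1) (hmax.isLocalMax hnhds) hone

lemma continuousOn_hypRatio (hB : IsProperDiskMap B) (hf : DifferentiableOn ℂ f 𝔻)
    (hmaps : Set.MapsTo f 𝔻 𝔻) (hh : ContinuousOn h 𝔻) :
    ContinuousOn (hypRatio f B h) 𝔻 := by
  have hfc := hf.continuousOn
  have hBc := hB.differentiableOn.continuousOn
  refine ContinuousOn.div (by fun_prop) (by fun_prop) fun w hw => ?_
  exact (one_sub_sq_norm_pos_iff.2 (mem_ball_zero_iff.1 (hmaps hw))).ne'

theorem hypRatio_le_one (hB : IsProperDiskMap B) (hf : DifferentiableOn ℂ f 𝔻)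
    (hmaps : Set.MapsTo f 𝔻 𝔻) (hh : AnalyticOnNhd ℂ h 𝔻)
    (hderiv : Set.EqOn (deriv f) (h * deriv B) 𝔻) {z : ℂ} (hz : z ∈ 𝔻) :
    hypRatio f B h z ≤ 1 := by
  by_contra! hgt
  obtain ⟨M, hM, hMz⟩ := exists_between hgt
  obtain ⟨p, hp, hmax⟩ : ∃ p ∈ 𝔻, IsMaxOn (hypRatio f B h) 𝔻 p := by
    refine exists_isMaxOn_of_eventually_lt ?_
      (hB.continuousOn_hypRatio hf hmaps hh.continuousOn) hz fun ζ hζ => ?_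
    · exact (isCompact_closedBall 0 1).of_isClosed_subset isClosed_closure
        closure_ball_subset_closedBall
    · have hζ1 : ‖ζ‖ = 1 := by simpa [closure_ball, le_antisymm_iff] using hζ
      exact (hB.eventually_hypRatio_le hf hmaps hderiv hζ1 hM).mono fun w hw => hw.trans_lt hMz
  have hlt : 1 < hypRatio f B h p := hgt.trans_le (hmax hz)
  exact hlt.ne'
    (hB.hypRatio_eq_one_and_exists_eventually_of_isMaxOn hf hmaps hh hderiv hp hmax hlt.le).1

theorem exists_eqOn_diskInvolution_of_hypRatio_eq_one (hB : IsProperDiskMap B)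
    (hf : DifferentiableOn ℂ f 𝔻) (hmaps : Set.MapsTo f 𝔻 𝔻) (hh : AnalyticOnNhd ℂ h 𝔻)
    (hderiv : Set.EqOn (deriv f) (h * deriv B) 𝔻) {z : ℂ} (hz : z ∈ 𝔻)
    (hone : hypRatio f B h z = 1) :
    ∃ τ z₀ : ℂ, ‖τ‖ = 1 ∧ ‖z₀‖ < 1 ∧ Set.EqOn f (fun w => τ * diskInvolution z₀ (B w)) 𝔻 := by
  have hmax : IsMaxOn (hypRatio f B h) 𝔻 z := fun w hw =>
    (hB.hypRatio_le_one hf hmaps hh hderiv hw).trans hone.ge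
  obtain ⟨-, c, hc, hloc⟩ :=
    hB.hypRatio_eq_one_and_exists_eventually_of_isMaxOn hf hmaps hh hderiv hz hmax hone.ge
  have hfz : ‖f z‖ < 1 := mem_ball_zero_iff.1 (hmaps hz)
  have hBz : ‖B z‖ < 1 := mem_ball_zero_iff.1 (hB.mapsTo_ball hz)
  have heq : Set.EqOn (diskInvolution (f z) ∘ f)
      (fun w => c * (diskInvolution (B z) ∘ B) w) 𝔻 := by
    refine AnalyticOnNhd.eqOn_of_preconnected_of_eventuallyEq (𝕜 := ℂ) ?_ ?_
      (convex_ball 0 1).isPreconnected hz hloc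
    · exact ((differentiableOn_diskInvolution hfz).comp hf hmaps).analyticOnNhd isOpen_ball
    · exact (((differentiableOn_diskInvolution hBz).comp hB.differentiableOn
        hB.mapsTo_ball).const_mul c).analyticOnNhd isOpen_ball
  have hcf : ‖conj c * f z‖ < 1 := by rwa [norm_mul, Complex.norm_conj, hc, one_mul]
  obtain ⟨τ, z₀, hτ, hz₀, hcomp⟩ := exists_diskInvolution_comp_eq hcf hBz
  refine ⟨c * τ, z₀, by rw [norm_mul, hc, hτ, one_mul], hz₀, fun w hw => ?_⟩
  calc f w
    _ = diskInvolution (f z) (diskInvolution (f z) (f w)) :=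
      (diskInvolution_diskInvolution hfz (mem_ball_zero_iff.1 (hmaps hw)).le).symm
    _ = diskInvolution (f z) (c * diskInvolution (B z) (B w)) := congrArg _ (heq hw)
    _ = c * diskInvolution (conj c * f z) (diskInvolution (B z) (B w)) :=
      diskInvolution_mul _ _ hc
    _ = c * τ * diskInvolution z₀ (B w) := by
      rw [hcomp _ (mem_ball_zero_iff.1 (hB.mapsTo_ball hw)).le, mul_assoc]

end IsProperDiskMap

end NehariSchwarz

/-! ### Finite Blaschke products -/

lemma isProperDiskMap_mul_prod_diskInvolution {ι : Type*} [Fintype ι] [Nonempty ι] {η : ℂ}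
    {a : ι → ℂ} (hη : ‖η‖ = 1) (ha : ∀ j, ‖a j‖ < 1) :
    IsProperDiskMap fun z => η * ∏ j, diskInvolution (a j) z where
  analyticOnNhd z hz := analyticAt_const.mul <| Finset.analyticAt_fun_prod _ fun j _ =>
    analyticAt_diskInvolution (ha j) (mem_closedBall_zero_iff.1 hz)
  mapsTo_ball z hz := by
    classical
    rw [mem_ball_zero_iff] at hz
    have hle : ∀ j, ‖diskInvolution (a j) z‖ < 1 := fun j => norm_diskInvolution_lt_one (ha j) hz
    obtain ⟨i⟩ := ‹Nonempty ι›
    rw [mem_ball_zero_iff, norm_mul, hη, one_mul, norm_prod,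
      ← Finset.mul_prod_erase _ _ (Finset.mem_univ i)]
    exact mul_lt_one_of_nonneg_of_lt_one_left (norm_nonneg _) (hle i)
      (Finset.prod_le_one (fun j _ => norm_nonneg _) fun j _ => (hle j).le)
  mapsTo_sphere z hz := by
    rw [mem_sphere_zero_iff_norm] at hz ⊢
    rw [norm_mul, hη, one_mul, norm_prod]
    exact Finset.prod_eq_one fun j _ => norm_diskInvolution_eq_one (ha j) hz

lemma norm_lt_of_norm_le_of_exists_ne {E F : Type*} [NormedAddCommGroup E] [NormedSpace ℂ E]
    [NormedAddCommGroup F] [NormedSpace ℂ F] [StrictConvexSpace ℝ F] {f : E → F} {U : Set E}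
    {r : ℝ} (hU : IsOpen U) (hconn : IsPreconnected U) (hf : DifferentiableOn ℂ f U)
    (hle : ∀ z ∈ U, ‖f z‖ ≤ r) (hne : ∃ z ∈ U, ∃ w ∈ U, f z ≠ f w) {z : E} (hz : z ∈ U) :
    ‖f z‖ < r := by
  refine (hle z hz).lt_of_ne fun heq => ?_
  have hconst := Complex.eqOn_of_isPreconnected_of_isMaxOn_norm hconn hU hf hz
    fun w hw => (hle w hw).trans heq.ge
  obtain ⟨u, hu, v, hv, huv⟩ := hne
  exact huv ((hconst hu).trans (hconst hv).symm)

/-- **Strong form of the Nehari–Schwarz lemma at an interior point.** If `f` is a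
nonconstant holomorphic map of the open unit disk into the closed unit disk, `B` is a
finite Blaschke product with every zero of `B'` in the disk being a zero of `f'` of at
least the same order, and equality `|f'(z)| (1 − |B(z)|²) = |B'(z)| (1 − |f(z)|²)`
holds at some point `z` of the disk with `B'(z) ≠ 0`, then `f = T ∘ B` for some
conformal automorphism `T` of the disk. -/
theorem nehari_schwarz_equality_interior (f : ℂ → ℂ)
    (hf_diff : ∀ z ∈ Metric.ball (0 : ℂ) 1, DifferentiableAt ℂ f z)
    (hf_le : ∀ z ∈ Metric.ball (0 : ℂ) 1, ‖f z‖ ≤ 1)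
    (hf_nc : ∃ z ∈ Metric.ball (0 : ℂ) 1, ∃ w ∈ Metric.ball (0 : ℂ) 1, f z ≠ f w)
    (n : ℕ) (η : ℂ) (a : Fin n → ℂ) (hη : ‖η‖ = 1) (ha : ∀ j, ‖a j‖ < 1)
    (B : ℂ → ℂ)
    (hB : ∀ z, B z = η * ∏ j, (a j - z) / (1 - (starRingEnd ℂ) (a j) * z))
    (hcrit : ∀ z ∈ Metric.ball (0 : ℂ) 1, vOrder (deriv B) z ≤ vOrder (deriv f) z)
    (z : ℂ) (hz : z ∈ Metric.ball (0 : ℂ) 1) (hz' : deriv B z ≠ 0)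
    (heq : ‖deriv f z‖ * (1 - ‖B z‖ ^ 2) = ‖deriv B z‖ * (1 - ‖f z‖ ^ 2)) :
    ∃ (τ : ℂ) (z₀ : ℂ), ‖τ‖ = 1 ∧ ‖z₀‖ < 1 ∧
      ∀ w ∈ Metric.ball (0 : ℂ) 1,
        f w = τ * (z₀ - B w) / (1 - (starRingEnd ℂ) z₀ * B w) := by
  have hBprod : B = fun z => η * ∏ j, diskInvolution (a j) z := funext hB
  have : Nonempty (Fin n) := not_isEmpty_iff.1 fun _ => hz' (by simp [hBprod])
  have hproper : IsProperDiskMap B := hBprod ▸ isProperDiskMap_mul_prod_diskInvolution hη ha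
  have hf : DifferentiableOn ℂ f 𝔻 := fun w hw => (hf_diff w hw).differentiableWithinAt
  have hmaps : Set.MapsTo f 𝔻 𝔻 := fun w hw => mem_ball_zero_iff.2 <|
    norm_lt_of_norm_le_of_exists_ne isOpen_ball (convex_ball 0 1).isPreconnected hf hf_le hf_nc hw
  have hf' := (hf.analyticOnNhd isOpen_ball).deriv
  have hB' := (hproper.differentiableOn.analyticOnNhd isOpen_ball).deriv
  obtain ⟨h, hh, hquot⟩ := exists_analyticOnNhd_eventuallyEq_mul hf' hB' fun p hp => by
    simpa only [vOrder_eq_analyticOrderAt (hf' p hp), vOrder_eq_analyticOrderAt (hB' p hp)]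
      using hcrit p hp
  have hderiv : Set.EqOn (deriv f) (h * deriv B) 𝔻 := fun w hw => (hquot w hw).self_of_nhds
  have hone : hypRatio f B h z = 1 := by
    rw [hderiv hz, Pi.mul_apply, norm_mul, mul_right_comm, mul_comm] at heq
    rw [hypRatio, mul_left_cancel₀ (norm_ne_zero_iff.2 hz') heq,
      div_self (one_sub_sq_norm_pos_iff.2 (mem_ball_zero_iff.1 (hmaps hz))).ne']
  obtain ⟨τ, z₀, hτ, hz₀, hfB⟩ :=
    hproper.exists_eqOn_diskInvolution_of_hypRatio_eq_one hf hmaps hh hderiv hz hone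
  exact ⟨τ, z₀, hτ, hz₀, fun w hw => (hfB hw).trans (mul_div_assoc _ _ _).symm⟩
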